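/- For h ≥ 0 let x_h be the sequence of length 2^{h+1} − 1 defined by x_h[i] = (h − v₂(i))·2^{h+1} + i, where v₂(i) is the 2-adic valuation of i (its Cartesian tree is the complete binary tree of height h). Then for every h ≥ 1, |NG(x_h)| = 2·|NG(x_{h−1})| + 2(h+1). -/

import Mathlib

/-- A sequence of length `n`: a function `ℕ → ℤ` injective on positions `1,…,n`. -/
def IsSeq (n : ℕ) (x : ℕ → ℤ) : Prop := Set.InjOn x (Set.Icc 1 n)

/-- Parent-distance table: `fwdPD x i = i - max{ j | 1 ≤ j < i, x j < x i }` if such `j`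
exists, `0` otherwise. -/
def fwdPD (x : ℕ → ℤ) (i : ℕ) : ℕ :=
  if h : ((Finset.Ico 1 i).filter (fun j => x j < x i)).Nonempty then
    i - ((Finset.Ico 1 i).filter (fun j => x j < x i)).max' h
  else 0

/-- Reverse parent-distance table: `revPD n x i = min{ j | i < j ≤ n, x j < x i } - i` if
such `j` exists, `0` otherwise. -/
def revPD (n : ℕ) (x : ℕ → ℤ) (i : ℕ) : ℕ :=
  if h : ((Finset.Ioc i n).filter (fun j => x j < x i)).Nonempty then
    ((Finset.Ioc i n).filter (fun j => x j < x i)).min' h - i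
  else 0

/-- The swap `τ(x,i)`: exchanges positions `i` and `i+1`. -/
def swapSeq (x : ℕ → ℤ) (i : ℕ) : ℕ → ℤ :=
  fun j => if j = i then x (i + 1) else if j = i + 1 then x i else x j

/-- The parent-distance table of a sequence of length `n`, as a function on `Fin n`
(position `k : Fin n` corresponds to index `k+1 ∈ {1,…,n}`). -/
def PDvec (n : ℕ) (x : ℕ → ℤ) : Fin n → ℕ := fun k => fwdPD x (k.1 + 1)

/-- `NGat n x i` is the set of parent-distance tables obtained by a swap at position `i`
(`1 ≤ i ≤ n-1`) from some sequence `z` having the same Cartesian tree (i.e. the same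
parent-distance table) as `x`; it is empty for `i` out of range. -/
def NGat (n : ℕ) (x : ℕ → ℤ) (i : ℕ) : Set (Fin n → ℕ) :=
  {P | 1 ≤ i ∧ i + 1 ≤ n ∧
    ∃ z, IsSeq n z ∧ PDvec n z = PDvec n x ∧ P = PDvec n (swapSeq z i)}

/-- The neighborhood of (the Cartesian tree of) `x` in the swap graph. -/
def NG (n : ℕ) (x : ℕ → ℤ) : Set (Fin n → ℕ) := ⋃ i, NGat n x i

/-- A sequence of length `2^(h+1) - 1` whose Cartesian tree is the complete binary tree
of height `h`: `x_h[i] = (h - v₂(i)) * 2^(h+1) + i`, where `v₂` is the 2-adic valuation. -/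
def compSeq (h : ℕ) : ℕ → ℤ :=
  fun i => ((h - padicValNat 2 i : ℕ) : ℤ) * (2 ^ (h + 1) : ℕ) + (i : ℤ)

/-- The largest power of two dividing `i`. -/
def lowBit (i : ℕ) : ℕ := 2 ^ padicValNat 2 i

/-- The parent-distance table of the complete binary tree. -/
def compPD (i : ℕ) : ℕ := if i = lowBit i then 0 else lowBit i

/-- The values of `z` on `1,…,n` are heap ordered along the complete binary tree. -/
def IsCompHeap (n : ℕ) (z : ℕ → ℤ) : Prop :=
  ∀ e k, 1 ≤ e → e ≤ n → 1 ≤ k → k ≤ n → k ≠ e → e < k + lowBit e → k < e + lowBit e → z e < z k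

lemma lowBit_pos (i : ℕ) : 1 ≤ lowBit i := Nat.one_le_two_pow

lemma lowBit_dvd (i : ℕ) : lowBit i ∣ i := pow_padicValNat_dvd

lemma lowBit_le {i : ℕ} (hi : 1 ≤ i) : lowBit i ≤ i := Nat.le_of_dvd hi (lowBit_dvd i)

lemma lowBit_odd {i : ℕ} (hi : i % 2 = 1) : lowBit i = 1 := by
  unfold lowBit
  rw [padicValNat.eq_zero_of_not_dvd (by omega), pow_zero]

lemma two_le_lowBit {i : ℕ} (hi : 1 ≤ i) (he : i % 2 = 0) : 2 ≤ lowBit i := by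
  unfold lowBit
  have : 1 ≤ padicValNat 2 i :=
    (padicValNat_dvd_iff_le (p := 2) (by omega)).1 (by rw [pow_one]; omega)
  calc 2 = 2 ^ 1 := rfl
    _ ≤ _ := Nat.pow_le_pow_right (by norm_num) this

lemma padicValNat_add_of_lt {a r s : ℕ} (ha : 2 ^ s ∣ a) (hr : 1 ≤ r) (hrs : r < 2 ^ s) :
    padicValNat 2 (a + r) = padicValNat 2 r := by
  have key : ∀ m, 2 ^ m ∣ a + r ↔ 2 ^ m ∣ r := by
    intro m
    rcases le_total m s with hm | hm
    · exact Nat.dvd_add_right ((pow_dvd_pow 2 hm).trans ha)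
    · constructor
      · intro hd
        have := (Nat.dvd_add_right ha).1 ((pow_dvd_pow 2 hm).trans hd)
        exact absurd (Nat.le_of_dvd hr this) (by omega)
      · intro hd
        exact absurd (Nat.le_of_dvd hr ((pow_dvd_pow 2 hm).trans hd)) (by omega)
  apply le_antisymm
  · rw [← padicValNat_dvd_iff_le (by omega), ← key]; exact pow_padicValNat_dvd
  · rw [← padicValNat_dvd_iff_le (by omega), key]; exact pow_padicValNat_dvd

lemma lowBit_add_of_lt {a r s : ℕ} (ha : 2 ^ s ∣ a) (hr : 1 ≤ r) (hrs : r < 2 ^ s) :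
    lowBit (a + r) = lowBit r := by
  unfold lowBit; rw [padicValNat_add_of_lt ha hr hrs]

lemma lowBit_two_pow (s : ℕ) : lowBit (2 ^ s) = 2 ^ s := by
  unfold lowBit; rw [padicValNat.prime_pow]

lemma add_lowBit_le {r s : ℕ} (hr : 1 ≤ r) (hrs : r < 2 ^ s) : r + lowBit r ≤ 2 ^ s := by
  have hle : lowBit r ≤ 2 ^ s := (lowBit_le hr).trans hrs.le
  have hd : lowBit r ∣ 2 ^ s := pow_dvd_pow 2 ((Nat.pow_le_pow_iff_right (by norm_num)).1 hle)
  have := Nat.le_of_dvd (by omega) (Nat.dvd_sub hd (lowBit_dvd r))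
  omega

lemma lowBit_lt_of_near {e k : ℕ} (hk : 1 ≤ k) (hne : k ≠ e) (he : 1 ≤ e)
    (h1 : e < k + lowBit e) (h2 : k < e + lowBit e) : lowBit k < lowBit e := by
  have hle := lowBit_le he
  rcases lt_or_gt_of_ne hne with h | h
  · obtain ⟨r, rfl⟩ : ∃ r, k = (e - lowBit e) + r := ⟨k - (e - lowBit e), by omega⟩
    have hd : 2 ^ padicValNat 2 e ∣ e - lowBit e := Nat.dvd_sub (lowBit_dvd e) dvd_rfl
    rw [lowBit_add_of_lt hd (by omega) (show r < lowBit e by omega)]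
    exact (lowBit_le (by omega)).trans_lt (by omega)
  · obtain ⟨r, rfl⟩ : ∃ r, k = e + r := ⟨k - e, by omega⟩
    rw [lowBit_add_of_lt (lowBit_dvd e) (by omega) (show r < lowBit e by omega)]
    exact (lowBit_le (by omega)).trans_lt (by omega)

lemma two_mul_lowBit_le {j : ℕ} (hj : 1 ≤ j) (hne : j ≠ lowBit j) :
    2 * lowBit j ≤ lowBit (j - lowBit j) := by
  have hle := lowBit_le hj
  obtain ⟨m, hm⟩ := lowBit_dvd j
  have hodd : ¬ 2 ∣ m := by
    rintro ⟨c, rfl⟩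
    have : 2 ^ (padicValNat 2 j + 1) ∣ j := ⟨c, by rw [pow_succ]; unfold lowBit at hm; linarith⟩
    rw [padicValNat_dvd_iff_le (by omega)] at this
    omega
  have hd : 2 ^ (padicValNat 2 j + 1) ∣ j - lowBit j := by
    obtain ⟨c, hc⟩ : ∃ c, m = 2 * c + 1 := ⟨m / 2, by omega⟩
    refine ⟨c, ?_⟩
    have : j = lowBit j * (2 * c) + lowBit j := by rw [hc] at hm; linarith
    have h2 : 2 ^ (padicValNat 2 j + 1) * c = lowBit j * (2 * c) := by
      rw [pow_succ]; unfold lowBit; ring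
    omega
  rw [padicValNat_dvd_iff_le (by omega)] at hd
  calc 2 * lowBit j = 2 ^ (padicValNat 2 j + 1) := by rw [pow_succ]; unfold lowBit; ring
    _ ≤ _ := Nat.pow_le_pow_right (by norm_num) hd

lemma fwdPD_spec (z : ℕ → ℤ) (j : ℕ) :
    (fwdPD z j = 0 ∧ ∀ k, 1 ≤ k → k < j → z j ≤ z k) ∨
    (1 ≤ fwdPD z j ∧ fwdPD z j < j ∧ z (j - fwdPD z j) < z j ∧
      ∀ k, j - fwdPD z j < k → k < j → z j ≤ z k) := by
  unfold fwdPD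
  split_ifs with hne
  · right
    set m := ((Finset.Ico 1 j).filter (fun k => z k < z j)).max' hne with hm
    have hmem := Finset.max'_mem _ hne
    rw [← hm, Finset.mem_filter, Finset.mem_Ico] at hmem
    refine ⟨by omega, by omega, ?_, ?_⟩
    · rw [show j - (j - m) = m by omega]; exact hmem.2
    · intro k hk hkj
      by_contra hlt
      have := Finset.le_max' ((Finset.Ico 1 j).filter (fun k => z k < z j)) k
        (by rw [Finset.mem_filter, Finset.mem_Ico]; exact ⟨⟨by omega, hkj⟩, by omega⟩)
      omega
  · left
    refine ⟨rfl, fun k hk hkj => ?_⟩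
    by_contra hlt
    exact hne ⟨k, by rw [Finset.mem_filter, Finset.mem_Ico]; exact ⟨⟨hk, hkj⟩, by omega⟩⟩

lemma fwdPD_eq_zero {z : ℕ → ℤ} {j : ℕ} (hz : ∀ k, 1 ≤ k → k < j → z j ≤ z k) :
    fwdPD z j = 0 := by
  rcases fwdPD_spec z j with h | ⟨h1, h2, h3, -⟩
  · exact h.1
  · exact absurd (hz (j - fwdPD z j) (by omega) (by omega)) (by omega)

lemma fwdPD_eq {z : ℕ → ℤ} {j d : ℕ} (hd : 1 ≤ d) (hdj : d < j) (hlt : z (j - d) < z j)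
    (hz : ∀ k, j - d < k → k < j → z j ≤ z k) : fwdPD z j = d := by
  rcases fwdPD_spec z j with ⟨-, h⟩ | ⟨h1, h2, h3, h4⟩
  · exact absurd (h (j - d) (by omega) (by omega)) (by omega)
  · rcases lt_trichotomy (fwdPD z j) d with h | h | h
    · exact absurd (hz (j - fwdPD z j) (by omega) (by omega)) (by omega)
    · exact h
    · exact absurd (h4 (j - d) (by omega) (by omega)) (by omega)

lemma IsCompHeap.parent_lt {n : ℕ} {z : ℕ → ℤ} (hz : IsCompHeap n z) {j : ℕ} (hj : 1 ≤ j)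
    (hjn : j ≤ n) (hne : j ≠ lowBit j) : z (j - lowBit j) < z j := by
  have := lowBit_le hj
  have := lowBit_pos j
  have := two_mul_lowBit_le hj hne
  exact hz _ _ (by omega) (by omega) hj hjn (by omega) (by omega) (by omega)

lemma IsCompHeap.fwdPD_eq {n : ℕ} {z : ℕ → ℤ} (hz : IsCompHeap n z) {j : ℕ} (hj : 1 ≤ j)
    (hjn : j ≤ n) : fwdPD z j = compPD j := by
  have hle := lowBit_le hj
  unfold compPD
  split_ifs with h
  · exact fwdPD_eq_zero fun k hk hkj =>
      (hz j k hj hjn hk (by omega) (by omega) (by omega) (by omega)).le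
  · exact _root_.fwdPD_eq (lowBit_pos j) (by omega) (hz.parent_lt hj hjn h) fun k hk hkj =>
      (hz j k hj hjn (by omega) (by omega) (by omega) (by omega) (by omega)).le

lemma isCompHeap_of_fwdPD_eq {n : ℕ} {z : ℕ → ℤ} (hs : IsSeq n z)
    (hz : ∀ j, 1 ≤ j → j ≤ n → fwdPD z j = compPD j) : IsCompHeap n z := by
  intro e k he hen hk hkn hne h1 h2
  have hle := lowBit_le he
  rcases lt_or_gt_of_ne hne with h | h
  · refine lt_of_le_of_ne ?_ fun heq => hne (hs ⟨hk, hkn⟩ ⟨he, hen⟩ heq.symm)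
    have hpe := hz e he hen
    unfold compPD at hpe
    rcases fwdPD_spec z e with ⟨-, hs⟩ | ⟨h3, h4, -, h6⟩
    · exact hs k hk h
    · split_ifs at hpe with hp
      · omega
      · exact h6 k (by omega) h
  · induction k using Nat.strong_induction_on with
    | _ k ih =>
      have hr : lowBit k ≤ k - e := by
        have := lowBit_add_of_lt (r := k - e) (lowBit_dvd e) (by omega) (show k - e < lowBit e by omega)
        rw [show e + (k - e) = k by omega] at this
        rw [this]; exact lowBit_le (by omega)
      have hpos := lowBit_pos k
      have hpk := hz k hk hkn
      unfold compPD at hpk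
      rw [if_neg (by omega)] at hpk
      rcases fwdPD_spec z k with ⟨h0, -⟩ | ⟨h3, h4, h5, -⟩
      · omega
      · rw [hpk] at h5
        rcases eq_or_lt_of_le (show e ≤ k - lowBit k by omega) with heq | hlt
        · rw [heq]; exact h5
        · exact (ih (k - lowBit k) (by omega) (by omega) (by omega) (by omega) (by omega)
            (by omega) hlt).trans h5

/-- Table after swapping positions `e`, `e + 1` (`e` even), where the entry moved to position `e`
falls below exactly the `s` deepest nodes on the right spine of the left subtree of `e`. -/
def swapRightPD (e s j : ℕ) : ℕ :=
  if j < e then compPD j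
  else if j = e then (if e = 2 ^ s then 0 else 2 ^ s)
  else if j = e + 1 then (if e = lowBit e then 0 else lowBit e + 1)
  else if j - compPD j = e then compPD j - 1 else compPD j

/-- Table after swapping positions `e - 1`, `e` (`e` even), where the entry moved to position `e`
falls below exactly the `c` deepest nodes on the left spine of the right subtree of `e`. -/
def swapLeftPD (e c j : ℕ) : ℕ :=
  if j + 1 < e then compPD j
  else if j + 1 = e then compPD e - 1
  else if j = e then 1
  else if j - compPD j = e ∧ 2 ^ c ≤ compPD j then compPD j + 1 else compPD j

lemma fwdPD_congr {y z : ℕ → ℤ} {j : ℕ} (h : ∀ k, k ≤ j → y k = z k) : fwdPD y j = fwdPD z j := by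
  rcases fwdPD_spec z j with ⟨h0, h1⟩ | ⟨h1, h2, h3, h4⟩
  · rw [h0]
    exact fwdPD_eq_zero fun k hk hkj => by rw [h j le_rfl, h k hkj.le]; exact h1 k hk hkj
  · refine fwdPD_eq h1 h2 ?_ fun k hk hkj => ?_
    · rw [h j le_rfl, h _ (by omega)]; exact h3
    · rw [h j le_rfl, h k hkj.le]; exact h4 k hk hkj

lemma swapSeq_left (z : ℕ → ℤ) (i : ℕ) : swapSeq z i i = z (i + 1) := by simp [swapSeq]

lemma swapSeq_right (z : ℕ → ℤ) (i : ℕ) : swapSeq z i (i + 1) = z i := by simp [swapSeq]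

lemma swapSeq_of_ne (z : ℕ → ℤ) {i j : ℕ} (h : j ≠ i) (h' : j ≠ i + 1) : swapSeq z i j = z j := by
  simp [swapSeq, h, h']

/-- A lower bound for `z` on an interval containing both swapped positions survives the swap. -/
lemma le_swapSeq {z : ℕ → ℤ} {a : ℤ} {i l u : ℕ} (hl : l < i) (hu : i + 1 < u)
    (h : ∀ k, l < k → k < u → a ≤ z k) {k : ℕ} (hk : l < k) (hku : k < u) : a ≤ swapSeq z i k := by
  unfold swapSeq
  split_ifs
  · exact h _ (by omega) (by omega)
  · exact h _ (by omega) (by omega)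
  · exact h _ hk hku

lemma fwdPD_swapSeq_even {n : ℕ} {z : ℕ → ℤ} (hz : IsCompHeap n z) {e s : ℕ} (he : 1 ≤ e)
    (hev : e % 2 = 0) (hen : e + 1 ≤ n) (hs : 2 ^ s ≤ lowBit e)
    (hup : ∀ k, e < k + 2 ^ s → k < e → z (e + 1) ≤ z k)
    (hlow : 2 ^ s < lowBit e → z (e - 2 ^ s) < z (e + 1)) {j : ℕ} (hj : 1 ≤ j) (hjn : j ≤ n) :
    fwdPD (swapSeq z e) j = swapRightPD e s j := by
  have hle := lowBit_le he
  have h2 := two_le_lowBit he hev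
  have hs0 : 1 ≤ 2 ^ s := Nat.one_le_two_pow
  have hvw : z e < z (e + 1) :=
    hz e (e + 1) he (by omega) (by omega) hen (by omega) (by omega) (by omega)
  unfold swapRightPD
  rcases lt_trichotomy j e with h | rfl | h
  · rw [if_pos h, ← hz.fwdPD_eq hj hjn]
    exact fwdPD_congr fun k hk => swapSeq_of_ne z (by omega) (by omega)
  · rw [if_neg (by omega), if_pos rfl]
    split_ifs with hjs
    · refine fwdPD_eq_zero fun k hk hkj => ?_
      rw [swapSeq_left, swapSeq_of_ne z (by omega) (by omega)]
      exact hup k (by omega) hkj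
    · refine fwdPD_eq hs0 (by omega) ?_ fun k hk hkj => ?_
      · rw [swapSeq_left, swapSeq_of_ne z (by omega) (by omega)]
        rcases lt_or_eq_of_le hs with hlt | heq
        · exact hlow hlt
        · rw [heq]; exact (hz.parent_lt hj hjn (by omega)).trans hvw
      · rw [swapSeq_left, swapSeq_of_ne z (by omega) (by omega)]
        exact hup k (by omega) hkj
  · rw [if_neg (by omega), if_neg (by omega)]
    rcases eq_or_lt_of_le (Nat.succ_le_of_lt h) with heq | hlt
    · obtain rfl : j = e + 1 := heq.symm
      rw [if_pos rfl]
      have hab : ∀ k, 1 ≤ k → e < k + lowBit e → k < e + 1 → z e ≤ swapSeq z e k := by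
        intro k hk0 hk hke
        rcases eq_or_ne k e with rfl | hne
        · rw [swapSeq_left]; exact hvw.le
        · rw [swapSeq_of_ne z hne (by omega)]
          exact (hz e k he (by omega) hk0 (by omega) hne hk (by omega)).le
      split_ifs with hp
      · refine fwdPD_eq_zero fun k hk hkj => ?_
        rw [swapSeq_right]
        exact hab k hk (by omega) hkj
      · refine fwdPD_eq (by omega) (by omega) ?_ fun k hk hkj => ?_
        · rw [swapSeq_right, swapSeq_of_ne z (by omega) (by omega),
            show e + 1 - (lowBit e + 1) = e - lowBit e by omega]
          exact hz.parent_lt he (by omega) hp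
        · rw [swapSeq_right]
          exact hab k (by omega) (by omega) hkj
    · rw [if_neg (by omega)]
      have hyj : swapSeq z e j = z j := swapSeq_of_ne z (by omega) (by omega)
      have hb := lowBit_pos j
      have hjle := lowBit_le hj
      unfold compPD
      split_ifs with hp hq hq
      · omega
      · refine fwdPD_eq_zero fun k hk hkj => ?_
        rw [hyj]
        exact le_swapSeq (l := 0) (u := j) (by omega) (by omega)
          (fun k hk hkj => (hz j k hj hjn hk (by omega) (by omega) (by omega) (by omega)).le)
          (by omega) hkj
      · refine fwdPD_eq (by omega) (by omega) ?_ fun k hk hkj => ?_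
        · rw [hyj, show j - (lowBit j - 1) = e + 1 by omega, swapSeq_right, ← hq]
          exact hz.parent_lt hj hjn hp
        · rw [hyj, swapSeq_of_ne z (by omega) (by omega)]
          exact (hz j k hj hjn (by omega) (by omega) (by omega) (by omega) (by omega)).le
      · have hpar := hz.parent_lt hj hjn hp
        have hq1 : j - lowBit j ≠ e + 1 := by
          intro hq1
          have := two_mul_lowBit_le hj hp
          rw [hq1, lowBit_odd (i := e + 1) (by omega)] at this
          omega
        have hab : ∀ k, j - lowBit j < k → k < j → z j ≤ z k := fun k hk hkj =>
          (hz j k hj hjn (by omega) (by omega) (by omega) (by omega) (by omega)).le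
        refine fwdPD_eq hb (by omega) ?_ fun k hk hkj => ?_
        · rw [hyj, swapSeq_of_ne z hq hq1]; exact hpar
        · rw [hyj]
          rcases lt_or_gt_of_ne hq with hq' | hq'
          · exact le_swapSeq hq' hlt hab hk hkj
          · rw [swapSeq_of_ne z (by omega) (by omega)]; exact hab k hk hkj

lemma fwdPD_swapSeq_odd {n : ℕ} {z : ℕ → ℤ} (hz : IsCompHeap n z) {i c : ℕ} (hi : 1 ≤ i)
    (hodd : i % 2 = 1) (hin : i + 1 ≤ n)
    (hlow : ∀ s, s < c → 2 ^ s < lowBit (i + 1) → z i < z (i + 1 + 2 ^ s))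
    (hup : ∀ s, c ≤ s → 2 ^ s < lowBit (i + 1) → z (i + 1 + 2 ^ s) ≤ z i)
    {j : ℕ} (hj : 1 ≤ j) (hjn : j ≤ n) :
    fwdPD (swapSeq z i) j = swapLeftPD (i + 1) c j := by
  have hle := lowBit_le (i := i + 1) (by omega)
  have h2 := two_le_lowBit (i := i + 1) (by omega) (by omega)
  have hvw : z (i + 1) < z i :=
    hz (i + 1) i (by omega) hin hi (by omega) (by omega) (by omega) (by omega)
  unfold swapLeftPD
  rcases lt_trichotomy j i with h | rfl | h
  · rw [if_pos (by omega), ← hz.fwdPD_eq hj hjn]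
    exact fwdPD_congr fun k hk => swapSeq_of_ne z (by omega) (by omega)
  · rw [if_neg (by omega), if_pos rfl]
    have hab : ∀ k, 1 ≤ k → j + 1 < k + lowBit (j + 1) → k < j →
        swapSeq z j j ≤ swapSeq z j k := by
      intro k hk0 hk hke
      rw [swapSeq_left, swapSeq_of_ne z (by omega) (by omega)]
      exact (hz (j + 1) k (by omega) hin hk0 (by omega) (by omega) hk (by omega)).le
    unfold compPD
    split_ifs with hp
    · exact fwdPD_eq_zero fun k hk hkj => hab k hk (by omega) hkj
    · refine fwdPD_eq (by omega) (by omega) ?_ fun k hk hkj => hab k (by omega) (by omega) hkj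
      rw [swapSeq_left, swapSeq_of_ne z (by omega) (by omega),
        show j - (lowBit (j + 1) - 1) = j + 1 - lowBit (j + 1) by omega]
      exact hz.parent_lt (by omega) hin hp
  · rw [if_neg (by omega), if_neg (by omega)]
    rcases eq_or_lt_of_le (Nat.succ_le_of_lt h) with heq | hlt
    · obtain rfl : j = i + 1 := heq.symm
      rw [if_pos rfl]
      refine fwdPD_eq le_rfl (by omega) ?_ fun k hk hkj => by omega
      rw [swapSeq_right, Nat.add_sub_cancel, swapSeq_left]
      exact hvw
    · rw [if_neg (by omega)]
      have hyj : swapSeq z i j = z j := swapSeq_of_ne z (by omega) (by omega)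
      have hb := lowBit_pos j
      have hjle := lowBit_le hj
      unfold compPD
      by_cases hp : j = lowBit j
      · rw [if_pos hp, if_neg (by omega)]
        refine fwdPD_eq_zero fun k hk hkj => ?_
        rw [hyj]
        exact le_swapSeq (l := 0) (u := j) (by omega) (by omega)
          (fun k hk hkj => (hz j k hj hjn hk (by omega) (by omega) (by omega) (by omega)).le)
          (by omega) hkj
      rw [if_neg hp]
      have hpar := hz.parent_lt hj hjn hp
      have h2m := two_mul_lowBit_le hj hp
      have hab : ∀ k, j - lowBit j < k → k < j → z j ≤ z k := fun k hk hkj =>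
        (hz j k hj hjn (by omega) (by omega) (by omega) (by omega) (by omega)).le
      by_cases hq : j - lowBit j = i + 1
      · have hlt2 : 2 ^ padicValNat 2 j < lowBit (i + 1) := by
          change lowBit j < _
          rw [hq] at h2m; omega
        have hjeq : i + 1 + 2 ^ padicValNat 2 j = j := by
          change i + 1 + lowBit j = j
          omega
        split_ifs with hc
        · have hcv : c ≤ padicValNat 2 j := (Nat.pow_le_pow_iff_right (by norm_num)).1 hc.2
          have hw := hup _ hcv hlt2
          rw [hjeq] at hw
          refine fwdPD_eq (by omega) (by omega) ?_ fun k hk hkj => ?_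
          · rw [hyj, show j - (lowBit j + 1) = i by omega, swapSeq_left, ← hq]
            exact hpar
          · rw [hyj]
            rcases eq_or_ne k (i + 1) with rfl | hne
            · rw [swapSeq_right]; exact hw
            · rw [swapSeq_of_ne z (by omega) hne]; exact hab k (by omega) hkj
        · have hcv : padicValNat 2 j < c := by
            by_contra hcv
            exact hc ⟨hq, Nat.pow_le_pow_right (by norm_num) (by omega)⟩
          have hw := hlow _ hcv hlt2
          rw [hjeq] at hw
          refine fwdPD_eq hb (by omega) ?_ fun k hk hkj => ?_
          · rw [hyj, hq, swapSeq_right]; exact hw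
          · rw [hyj, swapSeq_of_ne z (by omega) (by omega)]; exact hab k hk hkj
      · rw [if_neg (fun h => hq h.1)]
        have hq1 : j - lowBit j ≠ i := by
          intro hq1
          rw [hq1, lowBit_odd hodd] at h2m
          omega
        refine fwdPD_eq hb (by omega) ?_ fun k hk hkj => ?_
        · rw [hyj, swapSeq_of_ne z hq1 hq]; exact hpar
        · rw [hyj]
          rcases lt_or_gt_of_ne hq1 with hq' | hq'
          · exact le_swapSeq hq' hlt hab hk hkj
          · rw [swapSeq_of_ne z (by omega) (by omega)]; exact hab k hk hkj

lemma padicValNat_lt_of_lt {h k : ℕ} (hk : 1 ≤ k) (hlt : k < 2 ^ (h + 1)) :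
    padicValNat 2 k ≤ h :=
  Nat.lt_succ_iff.1 ((Nat.pow_lt_pow_iff_right (by norm_num)).1 ((lowBit_le hk).trans_lt hlt))

lemma mul_add_lt_mul_add {N A B b c : ℤ} (hAB : A < B) (h : b - c < N) (hN : 0 ≤ N) :
    A * N + b < B * N + c := by
  nlinarith [mul_le_mul_of_nonneg_right (Int.add_one_le_iff.2 hAB) hN]

/-- A heap-ordered sequence whose values strictly between `a` and `a + 2 ^ s` are raised above all
others; positions with equal valuation are ordered by `σ`. -/
def bumpSeq (h : ℕ) (σ : ℤ) (a s : ℕ) (k : ℕ) : ℤ :=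
  ((if a < k ∧ k < a + 2 ^ s then (h + 2 : ℤ) else 0) - padicValNat 2 k) * 2 ^ (h + 1) + σ * k

lemma bumpSeq_lt_of_coeff_lt {h : ℕ} {σ : ℤ} (hσ : σ = 1 ∨ σ = -1) {a s k l : ℕ} (hk : 1 ≤ k)
    (hl : 1 ≤ l) (hkn : k < 2 ^ (h + 1)) (hln : l < 2 ^ (h + 1))
    (hc : (if a < k ∧ k < a + 2 ^ s then (h + 2 : ℤ) else 0) - padicValNat 2 k <
      (if a < l ∧ l < a + 2 ^ s then (h + 2 : ℤ) else 0) - padicValNat 2 l) :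
    bumpSeq h σ a s k < bumpSeq h σ a s l := by
  zify at hkn hln
  refine mul_add_lt_mul_add hc ?_ (by positivity)
  rcases hσ with rfl | rfl <;> omega

lemma isSeq_bumpSeq {n h : ℕ} (hn : n + 1 = 2 ^ (h + 1)) {σ : ℤ} (hσ : σ = 1 ∨ σ = -1)
    (a s : ℕ) : IsSeq n (bumpSeq h σ a s) := by
  rintro k ⟨hk, hkn⟩ l ⟨hl, hln⟩ heq
  have h1 := fun hc => (bumpSeq_lt_of_coeff_lt (a := a) (s := s) hσ hk hl
    (by omega) (by omega) hc).ne heq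
  have h2 := fun hc => (bumpSeq_lt_of_coeff_lt (a := a) (s := s) hσ hl hk
    (by omega) (by omega) hc).ne heq.symm
  have h3 := le_antisymm (not_lt.1 h2) (not_lt.1 h1)
  unfold bumpSeq at heq
  rw [h3] at heq
  rcases hσ with rfl | rfl <;> omega

lemma isCompHeap_bumpSeq {n h : ℕ} (hn : n + 1 = 2 ^ (h + 1)) {σ : ℤ} (hσ : σ = 1 ∨ σ = -1)
    {a s : ℕ} (ha : 2 ^ s ∣ a) : IsCompHeap n (bumpSeq h σ a s) := by
  intro e k he hen hk hkn hne h1 h2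
  have hlt := lowBit_lt_of_near hk hne he h1 h2
  have hv : padicValNat 2 k < padicValNat 2 e := (Nat.pow_lt_pow_iff_right (by norm_num)).1 hlt
  apply bumpSeq_lt_of_coeff_lt hσ he hk (by omega) (by omega)
  have hin : a < e ∧ e < a + 2 ^ s → a < k ∧ k < a + 2 ^ s := by
    rintro ⟨hae, hea⟩
    have hb := lowBit_add_of_lt (r := e - a) ha (by omega) (by omega)
    have h3 := add_lowBit_le (r := e - a) (s := s) (by omega) (by omega)
    have h4 := lowBit_le (i := e - a) (by omega)
    rw [show a + (e - a) = e by omega] at hb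
    omega
  split_ifs with h3 h4 h4
  · omega
  · exact absurd (hin h3) h4
  · omega
  · omega

lemma isCompHeap_compSeq {n h : ℕ} (hn : n + 1 = 2 ^ (h + 1)) : IsCompHeap n (compSeq h) := by
  intro e k he hen hk hkn hne h1 h2
  have hlt := lowBit_lt_of_near hk hne he h1 h2
  have hv : padicValNat 2 k < padicValNat 2 e := (Nat.pow_lt_pow_iff_right (by norm_num)).1 hlt
  have := padicValNat_lt_of_lt he (show e < 2 ^ (h + 1) by omega)
  exact mul_add_lt_mul_add (by omega) (by omega) (by positivity)

lemma PDvec_eq_compSeq_iff {n h : ℕ} (hn : n + 1 = 2 ^ (h + 1)) {z : ℕ → ℤ} (hs : IsSeq n z) :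
    PDvec n z = PDvec n (compSeq h) ↔ IsCompHeap n z := by
  constructor
  · intro heq
    refine isCompHeap_of_fwdPD_eq hs fun j hj hjn => ?_
    have := congrFun heq ⟨j - 1, by omega⟩
    simp only [PDvec, Nat.sub_add_cancel hj] at this
    rw [this]
    exact (isCompHeap_compSeq hn).fwdPD_eq hj hjn
  · intro hz
    funext k
    have := k.2
    exact (hz.fwdPD_eq (by omega) (by omega)).trans
      ((isCompHeap_compSeq hn).fwdPD_eq (by omega) (by omega)).symm

/-- The tables obtained from the complete binary tree by a swap at `i`, indexed by `s`. -/
def swapPD (i s j : ℕ) : ℕ := if i % 2 = 0 then swapRightPD i s j else swapLeftPD (i + 1) s j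

/-- The table `swapPD` as a vector. -/
def swapPDvec (n i s : ℕ) : Fin n → ℕ := fun k => swapPD i s (k.1 + 1)

lemma padicValNat_odd {i : ℕ} (hi : i % 2 = 1) : padicValNat 2 i = 0 :=
  padicValNat.eq_zero_of_not_dvd (by omega)

lemma exists_swapPD {n : ℕ} {z : ℕ → ℤ} (hz : IsCompHeap n z) {i : ℕ} (hi : 1 ≤ i)
    (hin : i + 1 ≤ n) (hbound : i + 1 + lowBit (i + 1) ≤ n + 1) :
    ∃ s < padicValNat 2 i + padicValNat 2 (i + 1) + 1,
      ∀ j, 1 ≤ j → j ≤ n → fwdPD (swapSeq z i) j = swapPD i s j := by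
  unfold swapPD
  rcases Nat.mod_two_eq_zero_or_one i with hpar | hpar
  · have hle := lowBit_le hi
    have hex : ∃ s, s = padicValNat 2 i ∨ z (i - 2 ^ s) < z (i + 1) := ⟨_, Or.inl rfl⟩
    classical
    have hs := Nat.find_spec hex
    have hmin := fun m => Nat.find_min hex (m := m)
    set s := Nat.find hex
    have hst : s ≤ padicValNat 2 i := not_lt.1 fun h => hmin _ h (Or.inl rfl)
    have hpow : 2 ^ s ≤ lowBit i := Nat.pow_le_pow_right (by norm_num) hst
    refine ⟨s, by omega, fun j hj hjn => ?_⟩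
    rw [if_pos hpar]
    refine fwdPD_swapSeq_even hz hi hpar hin hpow (fun k hk hki => ?_) (fun hlt => ?_) hj hjn
    · rcases Nat.eq_zero_or_pos s with h0 | h0
      · rw [h0] at hk; omega
      have h1 := hmin (s - 1) (by omega)
      push Not at h1
      refine h1.2.trans ?_
      have hdouble : 2 ^ s = 2 * 2 ^ (s - 1) := by
        rw [← pow_succ', Nat.sub_add_cancel h0]
      have hd : 2 ^ s ∣ i - 2 ^ s := Nat.dvd_sub ((pow_dvd_pow 2 hst).trans (lowBit_dvd i)) dvd_rfl
      have hp1 : 1 ≤ 2 ^ (s - 1) := Nat.one_le_two_pow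
      have hb := lowBit_add_of_lt hd hp1 (by omega)
      rw [lowBit_two_pow, show i - 2 ^ s + 2 ^ (s - 1) = i - 2 ^ (s - 1) by omega] at hb
      rcases eq_or_ne k (i - 2 ^ (s - 1)) with rfl | hne
      · exact le_rfl
      · exact (hz _ k (by omega) (by omega) (by omega) (by omega) hne (by omega) (by omega)).le
    · exact hs.resolve_left fun heq => by rw [heq] at hlt; exact hlt.ne rfl
  · have hex : ∃ c, c = padicValNat 2 (i + 1) ∨ z (i + 1 + 2 ^ c) ≤ z i := ⟨_, Or.inl rfl⟩
    classical
    have hc := Nat.find_spec hex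
    have hmin := fun m => Nat.find_min hex (m := m)
    set c := Nat.find hex
    have hct : c ≤ padicValNat 2 (i + 1) := not_lt.1 fun h => hmin _ h (Or.inl rfl)
    refine ⟨c, by omega, fun j hj hjn => ?_⟩
    rw [if_neg (by omega)]
    refine fwdPD_swapSeq_odd hz hi hpar hin (fun s hs _ => ?_) (fun s hs hlt => ?_) hj hjn
    · have := hmin s hs
      push Not at this
      exact this.2
    · have hst : s < padicValNat 2 (i + 1) := (Nat.pow_lt_pow_iff_right (by norm_num)).1 hlt
      refine le_trans ?_ (hc.resolve_left (by omega))
      rcases eq_or_lt_of_le hs with rfl | hcs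
      · exact le_rfl
      · have hlt' : 2 ^ c < 2 ^ s := Nat.pow_lt_pow_right (by norm_num) hcs
        have hp1 : 1 ≤ 2 ^ c := Nat.one_le_two_pow
        have hb := lowBit_add_of_lt (lowBit_dvd (i + 1)) (show 1 ≤ 2 ^ s by omega) hlt
        rw [lowBit_two_pow] at hb
        exact (hz _ _ (by omega) (by omega) (by omega) (by omega) (by omega) (by omega)
          (by omega)).le

lemma exists_realization {n h : ℕ} (hn : n + 1 = 2 ^ (h + 1)) {i s : ℕ} (hi : 1 ≤ i)
    (hin : i + 1 ≤ n) (hs : s < padicValNat 2 i + padicValNat 2 (i + 1) + 1) :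
    ∃ z, IsSeq n z ∧ IsCompHeap n z ∧
      ∀ j, 1 ≤ j → j ≤ n → fwdPD (swapSeq z i) j = swapPD i s j := by
  unfold swapPD
  have hs0 : 1 ≤ 2 ^ s := Nat.one_le_two_pow
  rcases Nat.mod_two_eq_zero_or_one i with hpar | hpar
  · have hv1 := padicValNat_odd (i := i + 1) (by omega)
    have hst : s ≤ padicValNat 2 i := by omega
    have hpow : 2 ^ s ≤ lowBit i := Nat.pow_le_pow_right (by norm_num) hst
    have hle := lowBit_le hi
    have hd : 2 ^ s ∣ i - 2 ^ s := Nat.dvd_sub ((pow_dvd_pow 2 hst).trans (lowBit_dvd i)) dvd_rfl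
    have hz := isCompHeap_bumpSeq hn (Or.inl rfl : (1 : ℤ) = 1 ∨ (1 : ℤ) = -1) hd
    refine ⟨_, isSeq_bumpSeq hn (Or.inl rfl) _ _, hz, fun j hj hjn => ?_⟩
    rw [if_pos hpar]
    refine fwdPD_swapSeq_even hz hi hpar hin hpow (fun k hk hki => ?_) (fun hlt => ?_) hj hjn
    · refine (bumpSeq_lt_of_coeff_lt (Or.inl rfl) (by omega) (by omega) (by omega) (by omega) ?_).le
      have := padicValNat_lt_of_lt (h := h) (k := k) (by omega) (by omega)
      rw [if_neg (by omega), if_pos (by omega)]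
      omega
    · have hst' : s < padicValNat 2 i := (Nat.pow_lt_pow_iff_right (by norm_num)).1 hlt
      rcases Nat.eq_zero_or_pos s with rfl | h0
      · have := padicValNat_odd (i := i - 2 ^ 0) (by omega)
        unfold bumpSeq
        rw [if_neg (by omega), if_neg (by omega), this, hv1]
        push_cast
        omega
      · have h2 : 2 ≤ 2 ^ s := by
          calc 2 = 2 ^ 1 := rfl
            _ ≤ _ := Nat.pow_le_pow_right (by norm_num) h0
        have hdiv : 2 ∣ i - 2 ^ s := (dvd_pow_self 2 h0.ne').trans hd
        have := two_le_lowBit (i := i - 2 ^ s) (by omega) (by omega)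
        have hv : padicValNat 2 (i - 2 ^ s) ≠ 0 := by
          intro h0; unfold lowBit at this; rw [h0] at this; omega
        refine bumpSeq_lt_of_coeff_lt (Or.inl rfl) (by omega) (by omega) (by omega) (by omega) ?_
        rw [if_neg (by omega), if_neg (by omega)]
        omega
  · have hv1 := padicValNat_odd hpar
    have hst : s ≤ padicValNat 2 (i + 1) := by omega
    have hpow : 2 ^ s ≤ lowBit (i + 1) := Nat.pow_le_pow_right (by norm_num) hst
    have hbound := add_lowBit_le (r := i + 1) (s := h + 1) (by omega) (by omega)
    have hd : 2 ^ s ∣ i + 1 := (pow_dvd_pow 2 hst).trans (lowBit_dvd (i + 1))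
    have hz := isCompHeap_bumpSeq hn (Or.inr rfl : (-1 : ℤ) = 1 ∨ (-1 : ℤ) = -1) hd
    refine ⟨_, isSeq_bumpSeq hn (Or.inr rfl) _ _, hz, fun j hj hjn => ?_⟩
    rw [if_neg (by omega)]
    refine fwdPD_swapSeq_odd hz hi hpar hin (fun r hr hlt => ?_) (fun r hr hlt => ?_) hj hjn
    · have hr0 : 1 ≤ 2 ^ r := Nat.one_le_two_pow
      have hrs : 2 ^ r < 2 ^ s := Nat.pow_lt_pow_right (by norm_num) hr
      refine bumpSeq_lt_of_coeff_lt (Or.inr rfl) (by omega) (by omega) (by omega) (by omega) ?_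
      have := padicValNat_lt_of_lt (h := h) (k := i + 1 + 2 ^ r) (by omega) (by omega)
      rw [if_neg (by omega), if_pos (by omega)]
      omega
    · have hr0 : 1 ≤ 2 ^ r := Nat.one_le_two_pow
      have hrs : 2 ^ s ≤ 2 ^ r := Nat.pow_le_pow_right (by norm_num) hr
      have hv := padicValNat_add_of_lt (lowBit_dvd (i + 1)) hr0 hlt
      rw [padicValNat.prime_pow] at hv
      rcases Nat.eq_zero_or_pos r with rfl | h0
      · unfold bumpSeq
        rw [if_neg (by omega), if_neg (by omega), hv, hv1]
        push_cast
        omega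
      · refine (bumpSeq_lt_of_coeff_lt (Or.inr rfl) (by omega) (by omega) (by omega)
          (by omega) ?_).le
        rw [if_neg (by omega), if_neg (by omega)]
        omega

lemma NGat_compSeq {n h : ℕ} (hn : n + 1 = 2 ^ (h + 1)) {i : ℕ} (hi : 1 ≤ i) (hin : i + 1 ≤ n)
    (P : Fin n → ℕ) : P ∈ NGat n (compSeq h) i ↔
      ∃ s < padicValNat 2 i + padicValNat 2 (i + 1) + 1, P = swapPDvec n i s := by
  constructor
  · rintro ⟨-, -, z, hs, hz, rfl⟩
    rw [PDvec_eq_compSeq_iff hn hs] at hz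
    have hbound := add_lowBit_le (r := i + 1) (s := h + 1) (by omega) (by omega)
    obtain ⟨s, hs, hP⟩ := exists_swapPD hz hi hin (by omega)
    exact ⟨s, hs, funext fun k => hP _ (by omega) k.2⟩
  · rintro ⟨s, hs, rfl⟩
    obtain ⟨z, hz, hheap, hP⟩ := exists_realization hn hi hin hs
    exact ⟨hi, hin, z, hz, (PDvec_eq_compSeq_iff hn hz).2 hheap,
      funext fun k => (hP _ (by omega) k.2).symm⟩

lemma compPD_odd {j : ℕ} (h1 : j % 2 = 1) : compPD j = if j = 1 then 0 else 1 := by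
  unfold compPD; rw [lowBit_odd h1]

lemma compPD_ne_one {j : ℕ} (hj : 1 ≤ j) (h0 : j % 2 = 0) : compPD j ≠ 1 := by
  have := two_le_lowBit hj h0
  unfold compPD; split_ifs <;> omega

lemma compPD_le {j : ℕ} (hj : 1 ≤ j) : compPD j < j := by
  have := lowBit_le hj
  unfold compPD; split_ifs <;> omega

lemma swapPD_ne_of_lt {n i i' s s' : ℕ} (hi : 1 ≤ i) (hii : i < i') (hin : i' + 1 ≤ n)
    (heq : ∀ j, 1 ≤ j → j ≤ n → swapPD i s j = swapPD i' s' j) : False := by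
  have h1 := heq (i + 1) (by omega) (by omega)
  have h2 := heq (i + 2) (by omega) (by omega)
  unfold swapPD swapRightPD swapLeftPD at h1 h2
  have hs : 1 ≤ 2 ^ s := Nat.one_le_two_pow
  have hs' : 1 ≤ 2 ^ s' := Nat.one_le_two_pow
  rcases Nat.mod_two_eq_zero_or_one i with hpar | hpar
  · have h2i := two_le_lowBit hi hpar
    have hc := compPD_odd (j := i + 1) (by omega)
    have hc1 := compPD_ne_one (j := i + 2) (by omega) (by omega)
    have hc2 := compPD_le (j := i + 2) (by omega)
    simp only [hpar, if_true] at h1 h2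
    grind
  · have hc := compPD_odd (j := i + 2) (by omega)
    have hc1 := compPD_ne_one (j := i + 1) (by omega) (by omega)
    have h2i := two_le_lowBit (i := i + 1) (by omega) (by omega)
    grind

lemma swapPD_inj {n i s s' : ℕ} (hi : 1 ≤ i) (hin : i + 1 ≤ n)
    (hbound : i + 1 + lowBit (i + 1) ≤ n + 1) (hss : s < s')
    (hs' : s' < padicValNat 2 i + padicValNat 2 (i + 1) + 1)
    (heq : ∀ j, 1 ≤ j → j ≤ n → swapPD i s j = swapPD i s' j) : False := by
  have hs0 : 1 ≤ 2 ^ s := Nat.one_le_two_pow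
  have hlt : 2 ^ s < 2 ^ s' := Nat.pow_lt_pow_right (by norm_num) hss
  rcases Nat.mod_two_eq_zero_or_one i with hpar | hpar
  · have h1 := heq i hi (by omega)
    unfold swapPD swapRightPD at h1
    simp only [hpar, if_true, lt_irrefl, if_false] at h1
    split_ifs at h1 <;> omega
  · have hv := padicValNat_odd hpar
    have hpow : 2 ^ s' ≤ lowBit (i + 1) := Nat.pow_le_pow_right (by norm_num) (by omega)
    have h1 := heq (i + 1 + 2 ^ s) (by omega) (by omega)
    have hb := lowBit_add_of_lt (lowBit_dvd (i + 1)) hs0 (show 2 ^ s < lowBit (i + 1) by omega)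
    rw [lowBit_two_pow] at hb
    have hc : compPD (i + 1 + 2 ^ s) = 2 ^ s := by
      unfold compPD; rw [hb, if_neg (by omega)]
    unfold swapPD swapLeftPD at h1
    rw [hc] at h1
    split_ifs at h1 <;> omega

lemma ncard_NG_compSeq {n h : ℕ} (hn : n + 1 = 2 ^ (h + 1)) :
    (NG n (compSeq h)).ncard =
      ∑ i ∈ Finset.Ico 1 n, (padicValNat 2 i + padicValNat 2 (i + 1) + 1) := by
  have hset : NG n (compSeq h) = ↑(((Finset.Ico 1 n).sigma fun i =>
      Finset.range (padicValNat 2 i + padicValNat 2 (i + 1) + 1)).image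
        fun p : (_ : ℕ) × ℕ => swapPDvec n p.1 p.2) := by
    ext P
    simp only [NG, Set.mem_iUnion, Finset.coe_image, Set.mem_image, Finset.mem_coe,
      Finset.mem_sigma, Finset.mem_Ico, Finset.mem_range]
    constructor
    · rintro ⟨i, hP⟩
      obtain ⟨s, hs, rfl⟩ := (NGat_compSeq hn hP.1 hP.2.1 P).1 hP
      exact ⟨⟨i, s⟩, ⟨⟨hP.1, hP.2.1⟩, hs⟩, rfl⟩
    · rintro ⟨⟨i, s⟩, ⟨⟨hi, hin⟩, hs⟩, rfl⟩
      exact ⟨i, (NGat_compSeq hn hi hin _).2 ⟨s, hs, rfl⟩⟩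
  rw [hset, Set.ncard_coe_finset, Finset.card_image_of_injOn, Finset.card_sigma]
  · simp only [Finset.card_range]
  · rintro ⟨i, s⟩ hp ⟨i', s'⟩ hp' heq
    simp only [Finset.mem_coe, Finset.mem_sigma, Finset.mem_Ico, Finset.mem_range] at hp hp'
    have hall : ∀ j, 1 ≤ j → j ≤ n → swapPD i s j = swapPD i' s' j := by
      intro j hj hjn
      have := congrFun heq ⟨j - 1, by omega⟩
      simpa only [swapPDvec, Nat.sub_add_cancel hj] using this
    have hbound := add_lowBit_le (r := i + 1) (s := h + 1) (by omega) (by omega)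
    rcases lt_trichotomy i i' with hlt | rfl | hlt
    · exact (swapPD_ne_of_lt hp.1.1 hlt (by omega) hall).elim
    · rcases lt_trichotomy s s' with hlt | rfl | hlt
      · exact (swapPD_inj hp.1.1 (by omega) (by omega) hlt hp'.2 hall).elim
      · rfl
      · exact (swapPD_inj hp.1.1 (by omega) (by omega) hlt hp.2
          fun j hj hjn => (hall j hj hjn).symm).elim
    · exact (swapPD_ne_of_lt hp'.1.1 hlt (by omega)
        fun j hj hjn => (hall j hj hjn).symm).elim

/-- For every `h ≥ 1`, `|NG(x_h)| = 2·|NG(x_{h-1})| + 2(h+1)` (stated with `h → h+1`). -/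
theorem stmt16 (h : ℕ) :
    (NG (2 ^ (h + 2) - 1) (compSeq (h + 1))).ncard =
      2 * (NG (2 ^ (h + 1) - 1) (compSeq h)).ncard + 2 * (h + 2) := by
  have hpos : 1 ≤ 2 ^ h := Nat.one_le_two_pow
  have hp1 : 2 ^ (h + 1) = 2 * 2 ^ h := pow_succ' 2 h
  have hp2 : 2 ^ (h + 2) = 2 * 2 ^ (h + 1) := pow_succ' 2 (h + 1)
  rw [ncard_NG_compSeq (n := 2 ^ (h + 2) - 1) (h := h + 1) (by omega),
    ncard_NG_compSeq (n := 2 ^ (h + 1) - 1) (h := h) (by omega)]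
  obtain ⟨m, hm⟩ : ∃ m, 2 ^ (h + 1) = m + 1 := ⟨2 ^ (h + 1) - 1, by omega⟩
  set c : ℕ → ℕ := fun i => padicValNat 2 i + padicValNat 2 (i + 1) + 1 with hc
  change ∑ i ∈ Finset.Ico 1 (2 ^ (h + 2) - 1), c i =
    2 * ∑ i ∈ Finset.Ico 1 (2 ^ (h + 1) - 1), c i + 2 * (h + 2)
  rw [show 2 ^ (h + 2) - 1 = m + (m + 1) by omega, show 2 ^ (h + 1) - 1 = m by omega,
    ← Finset.sum_Ico_consecutive c (show 1 ≤ m + 2 by omega) (show m + 2 ≤ m + (m + 1) by omega),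
    Finset.sum_Ico_succ_top (show 1 ≤ m + 1 by omega), Finset.sum_Ico_succ_top (by omega),
    show m + 2 = 1 + (m + 1) by omega, ← Finset.sum_Ico_add' c 1 m (m + 1)]
  have hshift : ∑ i ∈ Finset.Ico 1 m, c (i + (m + 1)) = ∑ i ∈ Finset.Ico 1 m, c i := by
    refine Finset.sum_congr rfl fun i hi => ?_
    rw [Finset.mem_Ico] at hi
    simp only [hc]
    rw [← hm, show i + 2 ^ (h + 1) + 1 = 2 ^ (h + 1) + (i + 1) by omega,
      Nat.add_comm i (2 ^ (h + 1)), padicValNat_add_of_lt dvd_rfl hi.1 (by omega),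
      padicValNat_add_of_lt dvd_rfl (by omega) (by omega)]
  have htop : padicValNat 2 (m + 1) = h + 1 := by rw [← hm, padicValNat.prime_pow]
  have hc1 : c m = h + 2 := by
    simp only [hc]
    rw [htop, padicValNat_odd (by omega)]
    omega
  have hc2 : c (m + 1) = h + 2 := by
    simp only [hc]
    rw [htop, padicValNat_odd (i := m + 1 + 1) (by omega)]
  rw [hshift, hc1, hc2]
  omega
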